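/- arXiv:2404.13082 — 3 statements merged into one kernel-verified Lean document; each statement's English description precedes it below -/
import Mathlib

section
/- Let M ≥ 2 and let models 1,…,M have success probabilities p₁,…,p_M ∈ [0,1] and costs c₁,…,c_M, queried in order with independent outcomes. Fix an index k with 1 ≤ k ≤ M−1, and let E denote the expected cascade cost of the order (1,…,M) and E' the expected cascade cost of the order obtained by swapping positions k and k+1, where the expected cost of an order σ is Σ_{j=1}^{M} c_{σ(j)} · ∏_{i=1}^{j−1} (1 − p_{σ(i)}). Then E − E' = (∏_{i=1}^{k−1}(1 − p_i)) · (p_{k+1}·c_k − p_k·c_{k+1}). -/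
/-!
The swap changes neither the terms `j < k` nor, since the factors `1 - p k` and `1 - p (k + 1)`
commute, the terms `j ≥ k + 2`. Only the terms `j = k` and `j = k + 1` differ; with
`P = ∏_{i<k} (1 - p i)` their contribution to the difference is
`P * (c k + c (k+1) * (1 - p k)) - P * (c (k+1) + c k * (1 - p (k+1)))`,
which is the right-hand side. The proof is by induction on `M ≥ k + 2`.
-/

open Finset

lemma prod_swap_of_le (f : ℕ → ℝ) {k j : ℕ} (hj : j ≤ k) :
    ∏ i ∈ range j, f (Equiv.swap k (k + 1) i) = ∏ i ∈ range j, f i := by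
  refine prod_congr rfl fun i hi => ?_
  have hi := mem_range.1 hi
  rw [Equiv.swap_apply_of_ne_of_ne (by omega) (by omega)]

lemma prod_swap_of_ge (f : ℕ → ℝ) {k j : ℕ} (hj : k + 2 ≤ j) :
    ∏ i ∈ range j, f (Equiv.swap k (k + 1) i) = ∏ i ∈ range j, f i := by
  induction j, hj using Nat.le_induction with
  | base =>
    simp only [prod_range_succ, prod_swap_of_le f le_rfl, Equiv.swap_apply_left,
      Equiv.swap_apply_right]
    ring
  | succ j hj ih =>
    rw [prod_range_succ, prod_range_succ, ih,
      Equiv.swap_apply_of_ne_of_ne (by omega) (by omega)]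

/-- **Expected-cost difference under an adjacent swap.**
Models `0, …, M−1` have success probabilities `p i ∈ [0,1]` and costs `c i`,
queried in order with independent outcomes; the expected cost of the order
`σ` is `∑_{j<M} c (σ j) · ∏_{i<j} (1 − p (σ i))`.  For an adjacent pair of
positions `k, k+1` (with `k+1 < M`), the expected cost `E` of the identity
order minus the expected cost `E'` of the order with positions `k` and `k+1`
swapped equals `(∏_{i<k} (1 − p i)) · (p (k+1)·c k − p k·c (k+1))`. -/
theorem cascade_adjacent_swap_cost_diff (M : ℕ) (hM : 2 ≤ M)
    (p c : ℕ → ℝ) (hp : ∀ i < M, p i ∈ Set.Icc (0 : ℝ) 1)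
    (k : ℕ) (hk : k + 1 < M) :
    (∑ j ∈ range M, c j * ∏ i ∈ range j, (1 - p i)) -
      (∑ j ∈ range M,
        c (Equiv.swap k (k + 1) j) *
          ∏ i ∈ range j, (1 - p (Equiv.swap k (k + 1) i))) =
    (∏ i ∈ range k, (1 - p i)) * (p (k + 1) * c k - p k * c (k + 1)) := by
  clear hM hp
  induction M, (show k + 2 ≤ M from hk) using Nat.le_induction with
  | base =>
    have hsum : ∑ j ∈ range k, c (Equiv.swap k (k + 1) j) *
          ∏ i ∈ range j, (1 - p (Equiv.swap k (k + 1) i)) =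
        ∑ j ∈ range k, c j * ∏ i ∈ range j, (1 - p i) := by
      refine sum_congr rfl fun j hj => ?_
      have hj := mem_range.1 hj
      rw [prod_swap_of_le (fun i => 1 - p i) hj.le,
        Equiv.swap_apply_of_ne_of_ne (by omega) (by omega)]
    have hprod := prod_swap_of_le (fun i => 1 - p i) (le_refl k)
    simp only [sum_range_succ, prod_range_succ, hsum, hprod, Equiv.swap_apply_left,
      Equiv.swap_apply_right]
    ring
  | succ M hM ih =>
    rw [sum_range_succ, sum_range_succ, prod_swap_of_ge (fun i => 1 - p i) hM,
      Equiv.swap_apply_of_ne_of_ne (by omega) (by omega), add_sub_add_right_eq_sub]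
    exact ih hM
end

section
/- Let M ≥ 2 and let models 1,…,M have success probabilities p₁,…,p_M ∈ [0,1] and positive costs c₁,…,c_M > 0, queried with independent outcomes. If for some index k with 1 ≤ k ≤ M−1 we have p_k/c_k ≤ p_{k+1}/c_{k+1}, then the expected cascade cost of the order obtained by swapping positions k and k+1 is at most the expected cascade cost of the original order (1,…,M), where the expected cost of an order σ is Σ_{j=1}^{M} c_{σ(j)} · ∏_{i=1}^{j−1} (1 − p_{σ(i)}). If moreover p_k/c_k < p_{k+1}/c_{k+1} and ∏_{i=1}^{k−1}(1 − p_i) > 0, the swapped order has strictly smaller expected cost. -/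
/-!
Swapping positions `k` and `k + 1` only affects the terms `k` and `k + 1` of the cost: earlier
terms do not involve these models, and later terms involve both failure factors, whose product is
symmetric. With `P = ∏_{i<k} (1 - p i)`, the two remaining terms give
`original - swapped = P * (c k * p (k+1) - c (k+1) * p k)` (`cascade_cost_eq_swap_add`).
The second factor is nonnegative (positive) exactly when the ratios satisfy
`p k / c k ≤ p (k+1) / c (k+1)` (strictly), and `P ≥ 0` since probabilities are at most one.
-/

open Finset

lemma swap_adjacent_of_lt {k i : ℕ} (hi : i < k) : Equiv.swap k (k + 1) i = i :=
  Equiv.swap_apply_of_ne_of_ne (by omega) (by omega)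

lemma swap_adjacent_of_gt {k i : ℕ} (hi : k + 1 < i) : Equiv.swap k (k + 1) i = i :=
  Equiv.swap_apply_of_ne_of_ne (by omega) (by omega)

lemma prod_swap_prefix (p : ℕ → ℝ) {k j : ℕ} (hj : j ≤ k) :
    ∏ i ∈ range j, (1 - p (Equiv.swap k (k + 1) i)) = ∏ i ∈ range j, (1 - p i) := by
  refine prod_congr rfl fun i hi => ?_
  rw [swap_adjacent_of_lt (lt_of_lt_of_le (mem_range.1 hi) hj)]

/-- Once both swapped positions lie in the prefix, the failure probability is unchanged. -/
lemma prod_swap_past (p : ℕ → ℝ) (k n : ℕ) :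
    ∏ i ∈ range (k + 2 + n), (1 - p (Equiv.swap k (k + 1) i)) =
      ∏ i ∈ range (k + 2 + n), (1 - p i) := by
  induction n with
  | zero =>
    simp only [add_zero, prod_range_succ, prod_swap_prefix p le_rfl, Equiv.swap_apply_left,
      Equiv.swap_apply_right]
    ring
  | succ n ih =>
    rw [← add_assoc, prod_range_succ, prod_range_succ, ih, swap_adjacent_of_gt (by omega)]

/-- The exact change in expected cost under an adjacent swap, in a cascade of `k + 2 + n` models. -/
lemma cascade_cost_eq_swap_add (p c : ℕ → ℝ) (k n : ℕ) :
    (∑ j ∈ range (k + 2 + n), c j * ∏ i ∈ range j, (1 - p i)) =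
      (∑ j ∈ range (k + 2 + n), c (Equiv.swap k (k + 1) j) *
        ∏ i ∈ range j, (1 - p (Equiv.swap k (k + 1) i))) +
      (∏ i ∈ range k, (1 - p i)) * (c k * p (k + 1) - c (k + 1) * p k) := by
  induction n with
  | zero =>
    have hpre : ∑ j ∈ range k, c (Equiv.swap k (k + 1) j) *
        ∏ i ∈ range j, (1 - p (Equiv.swap k (k + 1) i)) =
        ∑ j ∈ range k, c j * ∏ i ∈ range j, (1 - p i) := by
      refine sum_congr rfl fun j hj => ?_
      have hj := mem_range.1 hj
      rw [swap_adjacent_of_lt hj, prod_swap_prefix p hj.le]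
    simp only [add_zero, sum_range_succ, prod_range_succ, hpre, prod_swap_prefix p le_rfl,
      Equiv.swap_apply_left, Equiv.swap_apply_right]
    ring
  | succ n ih =>
    rw [← add_assoc, sum_range_succ, sum_range_succ, ih, prod_swap_past,
      swap_adjacent_of_gt (by omega)]
    ring

/-- **Adjacent swap improves the cascade when cost-normalized accuracies are
out of order.**  Models `0, …, M−1` have success probabilities `p i ∈ [0,1]`
and positive costs `c i > 0`; the expected cost of an order `σ` is
`∑_{j<M} c (σ j) · ∏_{i<j} (1 − p (σ i))`.  If `p k / c k ≤ p (k+1) / c (k+1)`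
for some adjacent positions `k, k+1 < M`, then swapping positions `k` and
`k+1` does not increase the expected cost; and if moreover
`p k / c k < p (k+1) / c (k+1)` and `∏_{i<k} (1 − p i) > 0`, the swapped
order has strictly smaller expected cost. -/
theorem cascade_adjacent_swap_improves (M : ℕ) (hM : 2 ≤ M)
    (p c : ℕ → ℝ) (hp : ∀ i < M, p i ∈ Set.Icc (0 : ℝ) 1)
    (hc : ∀ i < M, 0 < c i)
    (k : ℕ) (hk : k + 1 < M)
    (h : p k / c k ≤ p (k + 1) / c (k + 1)) :
    (∑ j ∈ range M,
        c (Equiv.swap k (k + 1) j) *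
          ∏ i ∈ range j, (1 - p (Equiv.swap k (k + 1) i))) ≤
      (∑ j ∈ range M, c j * ∏ i ∈ range j, (1 - p i)) ∧
    (p k / c k < p (k + 1) / c (k + 1) →
      0 < ∏ i ∈ range k, (1 - p i) →
      (∑ j ∈ range M,
          c (Equiv.swap k (k + 1) j) *
            ∏ i ∈ range j, (1 - p (Equiv.swap k (k + 1) i))) <
        (∑ j ∈ range M, c j * ∏ i ∈ range j, (1 - p i))) := by
  obtain ⟨n, rfl⟩ : ∃ n, M = k + 2 + n := ⟨M - (k + 2), by omega⟩
  have hck := hc k (by omega)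
  have hck' := hc (k + 1) hk
  have hP : 0 ≤ ∏ i ∈ range k, (1 - p i) :=
    prod_nonneg fun i hi => by
      have := (hp i (by have := mem_range.1 hi; omega)).2
      linarith
  rw [cascade_cost_eq_swap_add p c k n]
  constructor
  · rw [div_le_div_iff₀ hck hck'] at h
    have := mul_nonneg hP (show 0 ≤ c k * p (k + 1) - c (k + 1) * p k by linarith)
    linarith
  · intro hlt hpos
    rw [div_lt_div_iff₀ hck hck'] at hlt
    have := mul_pos hpos (show 0 < c k * p (k + 1) - c (k + 1) * p k by linarith)
    linarith
end

section
/- Let M models have success probabilities p₁,…,p_M ∈ [0,1] and positive costs c₁,…,c_M > 0, with independent outcomes, and suppose the indexing is sorted by non-increasing cost-normalized accuracy: p₁/c₁ ≥ p₂/c₂ ≥ … ≥ p_M/c_M. Then for every permutation σ of {1,…,M}, the expected cascade cost of the sorted (identity) order is at most the expected cascade cost of the order σ: Σ_{j=1}^{M} c_j · ∏_{i=1}^{j−1} (1 − p_i) ≤ Σ_{j=1}^{M} c_{σ(j)} · ∏_{i=1}^{j−1} (1 − p_{σ(i)}). (This is the paper's Lemma 2: ordering models by decreasing cost-normalized accuracy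 minimizes the expected cost of an oracle-verified cascade.) -/
/-!
The proof is an exchange argument organised as insertion sort. The expected cost of querying a list
of models satisfies `cost (a :: l) = c a + (1 - p a) * cost l`, so exchanging two adjacent models
`a, b` at the head changes it by `p a * c b - p b * c a`, independently of the tail. Hence moving `a`
past a model `b` with smaller index never increases the cost (`cascadeCost_orderedInsert_le`), and
insertion sort as a whole never increases it (`cascadeCost_insertionSort_le`). Sorting the list
`σ 0, σ 1, …` yields `0, 1, …`, the identity order.
-/

open Finset

/-- Expected cost of querying the models of a list in order until the first success: the head is
always queried, and the tail only if the head fails. -/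
def cascadeCost {ι : Type*} (p c : ι → ℝ) : List ι → ℝ
  | [] => 0
  | a :: l => c a + (1 - p a) * cascadeCost p c l

/-- The recursive cost agrees with the closed formula. -/
lemma cascadeCost_ofFn {ι : Type*} (p c : ι → ℝ) (n : ℕ) (f : Fin n → ι) :
    cascadeCost p c (List.ofFn f) = ∑ j, c (f j) * ∏ i ∈ Finset.Iio j, (1 - p (f i)) := by
  have iio_prod : ∀ (m : ℕ) (g : Fin m → ℝ) (j : Fin m),
      ∏ i ∈ Finset.Iio j, g i = ∏ i, if i < j then g i else 1 := by
    intro m g j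
    rw [← Finset.prod_filter]
    congr 1
    ext i
    simp
  induction n with
  | zero => simp [cascadeCost]
  | succ n ih =>
    rw [List.ofFn_succ, cascadeCost, ih, Fin.sum_univ_succ, Finset.mul_sum]
    simp only [iio_prod]
    congr 1
    · simp
    · refine Finset.sum_congr rfl fun j _ => ?_
      rw [Fin.prod_univ_succ]
      simp only [Fin.succ_pos, if_true, Fin.succ_lt_succ_iff]
      ring

lemma cascadeCost_orderedInsert_le {ι : Type*} [LinearOrder ι] (p c : ι → ℝ)
    (hp : ∀ i, p i ≤ 1) (h : ∀ i j, i ≤ j → p j * c i ≤ p i * c j) (a : ι) (l : List ι) :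
    cascadeCost p c (l.orderedInsert (· ≤ ·) a) ≤ cascadeCost p c (a :: l) := by
  induction l with
  | nil => simp
  | cons b l ih =>
    by_cases hab : a ≤ b
    · simp [hab]
    · have hba := h b a (le_of_not_ge hab)
      have step := mul_le_mul_of_nonneg_left ih (sub_nonneg.2 (hp b))
      simp only [List.orderedInsert, hab, if_false, cascadeCost] at step ⊢
      linarith

lemma cascadeCost_insertionSort_le {ι : Type*} [LinearOrder ι] (p c : ι → ℝ)
    (hp : ∀ i, p i ≤ 1) (h : ∀ i j, i ≤ j → p j * c i ≤ p i * c j) (l : List ι) :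
    cascadeCost p c (l.insertionSort (· ≤ ·)) ≤ cascadeCost p c l := by
  induction l with
  | nil => simp
  | cons a l ih =>
    rw [List.insertionSort_cons]
    refine (cascadeCost_orderedInsert_le p c hp h a _).trans ?_
    have step := mul_le_mul_of_nonneg_left ih (sub_nonneg.2 (hp a))
    simp only [cascadeCost]
    linarith

/-- **Lemma 2: sorting by cost-normalized accuracy minimizes expected cascade
cost.**  Models indexed by `Fin M` have success probabilities `p i ∈ [0,1]`
and positive costs `c i > 0`, with independent outcomes, and the indexing is
sorted by non-increasing cost-normalized accuracy: `i ≤ j → p j / c j ≤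
p i / c i`.  Then for every permutation `σ` of the models, the expected
cascade cost of the identity (sorted) order is at most that of `σ`:
`∑ j, c j · ∏_{i<j} (1 − p i) ≤ ∑ j, c (σ j) · ∏_{i<j} (1 − p (σ i))`. -/
theorem cascade_sorted_order_optimal (M : ℕ) (p c : Fin M → ℝ)
    (hp : ∀ i, p i ∈ Set.Icc (0 : ℝ) 1) (hc : ∀ i, 0 < c i)
    (hsorted : ∀ i j : Fin M, i ≤ j → p j / c j ≤ p i / c i)
    (σ : Equiv.Perm (Fin M)) :
    ∑ j : Fin M, c j * ∏ i ∈ Finset.Iio j, (1 - p i) ≤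
      ∑ j : Fin M, c (σ j) * ∏ i ∈ Finset.Iio j, (1 - p (σ i)) := by
  have hcross : ∀ i j, i ≤ j → p j * c i ≤ p i * c j := fun i j hij =>
    (div_le_div_iff₀ (hc j) (hc i)).1 (hsorted i j hij)
  have hsort : (List.ofFn σ).insertionSort (· ≤ ·) = List.ofFn (id : Fin M → Fin M) := by
    refine List.Perm.eq_of_pairwise' (r := (· ≤ ·)) (List.pairwise_insertionSort _ _) ?_ ?_
    · exact List.pairwise_ofFn.2 fun i j hij => hij.le
    · exact (List.perm_insertionSort _ _).trans (σ.ofFn_comp_perm id)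
  have key := cascadeCost_insertionSort_le p c (fun i => (hp i).2) hcross (List.ofFn σ)
  rw [hsort, cascadeCost_ofFn, cascadeCost_ofFn] at key
  exact key
end
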